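/- arXiv:2603.18392 — 4 statements merged into one kernel-verified Lean document; each statement's English description precedes it below -/
import Mathlib

section
/- Let n ≥ 2, let v = (v_1,…,v_n) ∈ ℤ^n be nontrivial, and let 1 ≤ i ≤ n−1. Let v' be the vector obtained from v by the elementary Hurwitz move σ_i, i.e. v'_i = v_{i+1}, v'_{i+1} = 2v_{i+1} − v_i, and v'_j = v_j for j ∉ {i, i+1}. Then the multiset of residues of the entries of v' modulo 2d(v) equals the multiset of residues of the entries of v modulo 2d(v); that is, M(v') = M(v). -/
/-- The alternating sum `Δ(v) = Σ (−1)^{i−1} v_i` (0-indexed: `Σ (−1)^i v_i`). -/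
def altSum {n : ℕ} (v : Fin n → ℤ) : ℤ := ∑ i : Fin n, (-1 : ℤ) ^ (i : ℕ) * v i

/-- A vector is trivial if all its entries are equal. -/
def IsTrivialVec {n : ℕ} (v : Fin n → ℤ) : Prop := ∀ i j, v i = v j

/-- `d(v)`: the (nonnegative) greatest common divisor of all differences of entries. -/
def dval {n : ℕ} (v : Fin n → ℤ) : ℕ :=
  (Finset.univ : Finset (Fin n × Fin n)).gcd fun p => (v p.1 - v p.2).natAbs

/-- `k(v)`: the 2-adic valuation of `d(v)`. -/
def kval {n : ℕ} (v : Fin n → ℤ) : ℕ := padicValNat 2 (dval v)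

/-- The multiset of residues of the entries of `v` modulo `2d`. -/
def MresMod {n : ℕ} (v : Fin n → ℤ) (d : ℕ) : Multiset ℤ :=
  (Finset.univ.val : Multiset (Fin n)).map fun i => v i % (2 * (d : ℤ))

/-- `M(v)`: the multiset of residues of the entries of `v` modulo `2d(v)`. -/
def Mres {n : ℕ} (v : Fin n → ℤ) : Multiset ℤ := MresMod v (dval v)

/-- `v'` is obtained from `v` by an elementary Hurwitz move `σ_i`:
`(v_i, v_{i+1}) ↦ (v_{i+1}, 2v_{i+1} − v_i)`, all other entries unchanged. -/
def IsHurwitzMove {n : ℕ} (v v' : Fin n → ℤ) : Prop :=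
  ∃ (i : ℕ) (hi : i + 1 < n),
    v' ⟨i, Nat.lt_of_succ_lt hi⟩ = v ⟨i + 1, hi⟩ ∧
    v' ⟨i + 1, hi⟩ = 2 * v ⟨i + 1, hi⟩ - v ⟨i, Nat.lt_of_succ_lt hi⟩ ∧
    ∀ j : Fin n, (j : ℕ) ≠ i → (j : ℕ) ≠ i + 1 → v' j = v j

/-- Hurwitz equivalence: a finite sequence of elementary Hurwitz moves and inverses. -/
def HurwitzEquiv {n : ℕ} (v w : Fin n → ℤ) : Prop :=
  Relation.ReflTransGen (fun a b => IsHurwitzMove a b ∨ IsHurwitzMove b a) v w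

/-!
Modulo `2 * (v j - v i)` with `j = i + 1`, the new entry `2 * v j - v i` is just `v i`, so the move
merely swaps two entries. Since `d(v)` divides `v j - v i`, this gives the equality of residues
modulo `2 * d(v)`. The move also preserves `v j - v i`, so `d(v')` divides it as well, and comparing
the two vectors modulo each of `d(v)` and `d(v')` yields `d(v') = d(v)`.
-/

section

variable {m n : ℕ} {v : Fin n → ℤ} {w : Fin m → ℤ}

theorem dvd_dval_iff {e : ℕ} : e ∣ dval v ↔ ∀ i j, (e : ℤ) ∣ v i - v j := by
  simp only [dval, Finset.dvd_gcd_iff, Finset.mem_univ, forall_const, Prod.forall,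
    Int.natCast_dvd]

theorem dval_dvd_sub (v : Fin n → ℤ) (i j : Fin n) : (dval v : ℤ) ∣ v i - v j :=
  dvd_dval_iff.mp dvd_rfl i j

theorem dval_dvd_dval_of_modEq (f : Fin m → Fin n)
    (h : ∀ k, w k ≡ v (f k) [ZMOD dval v]) : dval v ∣ dval w := by
  refine dvd_dval_iff.mpr fun i j => ?_
  have hsub : w i - w j ≡ v (f i) - v (f j) [ZMOD dval v] := (h i).sub (h j)
  exact hsub.dvd_iff.mpr (dval_dvd_sub v (f i) (f j))

theorem mresMod_eq_of_modEq {d : ℕ} (e : Fin m ≃ Fin n)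
    (h : ∀ k, w k ≡ v (e k) [ZMOD 2 * d]) : MresMod w d = MresMod v d := by
  calc MresMod w d
      = (Finset.univ.val.map e).map fun k => v k % (2 * (d : ℤ)) := by
        rw [Multiset.map_map]
        exact Multiset.map_congr rfl fun k _ => h k
    _ = MresMod v d := by rw [Multiset.map_univ_val_equiv, MresMod]

end

namespace IsHurwitzMove

variable {n : ℕ} {v v' : Fin n → ℤ}

theorem exists_modEq_swap (h : IsHurwitzMove v v') :
    ∃ i j, v' j - v' i = v j - v i ∧
      ∀ k, v' k ≡ v (Equiv.swap i j k) [ZMOD 2 * (v j - v i)] := by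
  obtain ⟨i, hi, hleft, hright, hother⟩ := h
  refine ⟨⟨i, Nat.lt_of_succ_lt hi⟩, ⟨i + 1, hi⟩, by rw [hleft, hright]; ring, fun k => ?_⟩
  rcases eq_or_ne k ⟨i, Nat.lt_of_succ_lt hi⟩ with rfl | hki
  · rw [Equiv.swap_apply_left, hleft]
  rcases eq_or_ne k ⟨i + 1, hi⟩ with rfl | hkj
  · rw [Equiv.swap_apply_right, hright]
    exact (Int.modEq_iff_dvd.mpr ⟨1, by ring⟩).symm
  · rw [Equiv.swap_apply_of_ne_of_ne hki hkj,
      hother k (Fin.val_ne_iff.mpr hki) (Fin.val_ne_iff.mpr hkj)]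

theorem mresMod_eq (h : IsHurwitzMove v v') {d : ℕ} (hd : d ∣ dval v) :
    MresMod v' d = MresMod v d := by
  obtain ⟨i, j, -, hswap⟩ := h.exists_modEq_swap
  have hdiff : (d : ℤ) ∣ v j - v i := dvd_dval_iff.mp hd j i
  exact mresMod_eq_of_modEq (Equiv.swap i j) fun k => (hswap k).of_dvd (mul_dvd_mul_left 2 hdiff)

theorem dval_eq (h : IsHurwitzMove v v') : dval v' = dval v := by
  obtain ⟨i, j, hdiff, hswap⟩ := h.exists_modEq_swap
  have hswap_mod {e : ℤ} (he : e ∣ v j - v i) (k : Fin n) :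
      v' k ≡ v (Equiv.swap i j k) [ZMOD e] := (hswap k).of_dvd (he.mul_left 2)
  have hdvd' : (dval v' : ℤ) ∣ v j - v i := hdiff ▸ dval_dvd_sub v' j i
  apply Nat.dvd_antisymm
  · refine dval_dvd_dval_of_modEq (Equiv.swap i j) fun k => ?_
    simpa only [Equiv.swap_apply_self] using (hswap_mod hdvd' (Equiv.swap i j k)).symm
  · exact dval_dvd_dval_of_modEq (Equiv.swap i j) (hswap_mod (dval_dvd_sub v j i))

end IsHurwitzMove

/-- An elementary Hurwitz move preserves the multiset of residues modulo 2d(v);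
that is, M(v') = M(v). -/
theorem stmt_2 (n : ℕ) (hn : 2 ≤ n) (v v' : Fin n → ℤ)
    (hv : ¬ IsTrivialVec v)
    (h : IsHurwitzMove v v') :
    MresMod v' (dval v) = MresMod v (dval v) ∧ Mres v' = Mres v := by
  have hres : MresMod v' (dval v) = MresMod v (dval v) := h.mresMod_eq dvd_rfl
  exact ⟨hres, by rw [Mres, Mres, h.dval_eq, hres]⟩
end

section
/- Let m ≥ 1. A (possibly trivial) vector v ∈ ℤ^{2m} satisfies Δ(v) = 0 if and only if there exist integers a, b and nonnegative integers r, s with r + s = m such that v is Hurwitz equivalent to the vector (a,…,a, b,…,b) whose first 2r entries equal a and whose last 2s entries equal b. -/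
/-!
Two equal neighbours `a, a` can be moved past any entry, and moving them past `b` the other way
reflects them to `2b - a, 2b - a`. Hence a concatenation of such pairs can be permuted freely, and
any chosen pairs can be reflected in a further one.

A Euclidean descent on the two gaps of three consecutive entries makes the first two of them equal.
Splitting off these pairs from the left, `Δ = 0` forces the last two entries to agree as well, so
the vector becomes a concatenation of pairs. If the values of these pairs lie in `[lo, hi]` and one
of them, `y`, lies strictly inside, then folding the shorter of the two sides of `y` onto the longer
one shrinks the interval; this stops with at most two values.
-/

theorem ofFn_eq_take_append_cons_cons_drop {α : Type*} {n : ℕ} (v : Fin n → α) {i : ℕ}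
    (hi : i + 1 < n) :
    List.ofFn v = (List.ofFn v).take i ++
      v ⟨i, Nat.lt_of_succ_lt hi⟩ :: v ⟨i + 1, hi⟩ :: (List.ofFn v).drop (i + 2) := by
  have hdrop (j : ℕ) (hj : j < n) :
      (List.ofFn v).drop j = v ⟨j, hj⟩ :: (List.ofFn v).drop (j + 1) := by
    rw [List.drop_eq_getElem_cons (by simpa using hj), List.getElem_ofFn]
  rw [← hdrop, ← hdrop, List.take_append_drop]

theorem ofFn_ite_val_lt {α : Type*} {n k l : ℕ} (hn : k + l = n) (a b : α) :
    List.ofFn (fun j : Fin n => if (j : ℕ) < k then a else b) =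
      List.replicate k a ++ List.replicate l b := by
  refine List.ext_getElem (by simp [hn]) fun j _ _ => ?_
  simp [List.getElem_append]

/-- Every entry repeated twice: the concatenation of the pairs `a, a` for `a` in the list. -/
def doubled {α : Type*} (p : List α) : List α :=
  p.flatMap fun a => [a, a]

theorem doubled_replicate_append_replicate {α : Type*} (r s : ℕ) (a b : α) :
    doubled (List.replicate r a ++ List.replicate s b) =
      List.replicate (2 * r) a ++ List.replicate (2 * s) b := by
  have hreplicate (k : ℕ) (c : α) :
      doubled (List.replicate k c) = List.replicate (2 * k) c := by
    simp [doubled, List.flatMap_replicate, List.eq_replicate_iff, mul_comm]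
  rw [doubled, List.flatMap_append]
  exact congrArg₂ _ (hreplicate r a) (hreplicate s b)

section AddCommGroup

variable {A : Type*} [AddCommGroup A]

/-- The elementary Hurwitz move `σ_i` on lists of arbitrary length with entries in an additive
commutative group; the index `i` is encoded as the length of the common prefix. -/
inductive ListHurwitzMove : List A → List A → Prop
  | mk (l r : List A) (a b : A) :
    ListHurwitzMove (l ++ a :: b :: r) (l ++ b :: (2 • b - a) :: r)

/-- Hurwitz equivalence of lists. Unlike tuples indexed by `Fin n`, lists allow inductions that
split off entries. -/
def ListHurwitzEquiv (p q : List A) : Prop :=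
  Relation.EqvGen ListHurwitzMove p q

local infix:50 " ≈ₕ " => ListHurwitzEquiv

namespace ListHurwitzEquiv

@[refl]
theorem refl (p : List A) : p ≈ₕ p :=
  Relation.EqvGen.refl p

@[symm]
theorem symm {p q : List A} (h : p ≈ₕ q) : q ≈ₕ p :=
  Relation.EqvGen.symm _ _ h

@[trans]
theorem trans {p q r : List A} (hpq : p ≈ₕ q) (hqr : q ≈ₕ r) : p ≈ₕ r :=
  Relation.EqvGen.trans _ _ _ hpq hqr

instance : Trans (α := List A) ListHurwitzEquiv ListHurwitzEquiv ListHurwitzEquiv :=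
  ⟨trans⟩

theorem cons {p q : List A} (c : A) (h : p ≈ₕ q) : c :: p ≈ₕ c :: q := by
  induction h with
  | rel _ _ hmove =>
    obtain ⟨l, r, a, b⟩ := hmove
    exact .rel _ _ (.mk (c :: l) r a b)
  | refl => rfl
  | symm _ _ _ ih => exact ih.symm
  | trans _ _ _ _ _ ih₁ ih₂ => exact ih₁.trans ih₂

theorem length_eq {p q : List A} (h : p ≈ₕ q) : p.length = q.length := by
  induction h with
  | rel _ _ hmove => obtain ⟨l, r, a, b⟩ := hmove; simp
  | refl => rfl
  | symm _ _ _ ih => exact ih.symm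
  | trans _ _ _ _ _ ih₁ ih₂ => exact ih₁.trans ih₂

theorem alternatingSum_eq {p q : List A} (h : p ≈ₕ q) :
    p.alternatingSum = q.alternatingSum := by
  induction h with
  | rel _ _ hmove =>
    obtain ⟨l, r, a, b⟩ := hmove
    have hpair : (a :: b :: r).alternatingSum = (b :: (2 • b - a) :: r).alternatingSum := by
      simp only [List.alternatingSum_cons]
      abel
    rw [List.alternatingSum_append, hpair, ← List.alternatingSum_append]
  | refl => rfl
  | symm _ _ _ ih => exact ih.symm
  | trans _ _ _ _ _ ih₁ ih₂ => exact ih₁.trans ih₂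

theorem move_head (a b : A) (r : List A) : a :: b :: r ≈ₕ b :: (2 • b - a) :: r :=
  .rel _ _ (.mk [] r a b)

theorem inv_move_head (a b : A) (r : List A) : a :: b :: r ≈ₕ (2 • a - b) :: a :: r := by
  have h := (move_head (2 • a - b) a r).symm
  rwa [sub_sub_cancel] at h

theorem pair_cons_comm (a x : A) (r : List A) : a :: a :: x :: r ≈ₕ x :: a :: a :: r :=
  calc a :: a :: x :: r
    _ ≈ₕ a :: (2 • a - x) :: a :: r := (inv_move_head a x r).cons a
    _ ≈ₕ x :: a :: a :: r := (move_head x a (a :: r)).symm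

theorem pair_cons_reflect (a x : A) (r : List A) :
    a :: a :: x :: r ≈ₕ x :: (2 • x - a) :: (2 • x - a) :: r :=
  calc a :: a :: x :: r
    _ ≈ₕ a :: x :: (2 • x - a) :: r := (move_head a x r).cons a
    _ ≈ₕ x :: (2 • x - a) :: (2 • x - a) :: r := move_head a x _

theorem doubled_cons {p q : List A} (c : A) (h : doubled p ≈ₕ doubled q) :
    doubled (c :: p) ≈ₕ doubled (c :: q) :=
  (h.cons c).cons c

theorem doubled_of_perm {p q : List A} (h : p.Perm q) : doubled p ≈ₕ doubled q := by
  induction h with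
  | nil => rfl
  | cons x _ ih => exact ih.doubled_cons x
  | swap x y l => exact (pair_cons_comm y x _).trans ((pair_cons_comm y x _).cons x)
  | trans _ _ ih₁ ih₂ => exact ih₁.trans ih₂

theorem doubled_cons_reflect (x y : A) (l : List A) :
    doubled (x :: y :: l) ≈ₕ doubled ((2 • y - x) :: y :: l) :=
  calc doubled (x :: y :: l)
    _ ≈ₕ y :: (2 • y - x) :: (2 • y - x) :: y :: doubled l := pair_cons_reflect x y _
    _ ≈ₕ doubled (y :: (2 • y - x) :: l) := (pair_cons_comm (2 • y - x) y _).cons y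
    _ ≈ₕ doubled ((2 • y - x) :: y :: l) := doubled_of_perm (.swap _ _ _)

theorem doubled_cons_map_reflect (y : A) (l : List A) (P : A → Prop) [DecidablePred P] :
    doubled (y :: l) ≈ₕ doubled (y :: l.map fun x => if P x then 2 • y - x else x) := by
  set f : A → A := fun x => if P x then 2 • y - x else x with hf
  induction l with
  | nil => rfl
  | cons x l ih =>
    have hreflect : doubled (x :: y :: l.map f) ≈ₕ doubled (f x :: y :: l.map f) := by
      by_cases hx : P x
      · simpa only [hf, if_pos hx] using doubled_cons_reflect x y (l.map f)
      · simp only [hf, if_neg hx, refl]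
    calc doubled (y :: x :: l)
      _ ≈ₕ doubled (x :: y :: l) := doubled_of_perm (.swap _ _ _)
      _ ≈ₕ doubled (x :: y :: l.map f) := ih.doubled_cons x
      _ ≈ₕ doubled (f x :: y :: l.map f) := hreflect
      _ ≈ₕ doubled (y :: f x :: l.map f) := doubled_of_perm (.swap _ _ _)

theorem doubled_map_reflect {p : List A} {y : A} (hy : y ∈ p) (P : A → Prop) [DecidablePred P] :
    doubled p ≈ₕ doubled (p.map fun x => if P x then 2 • y - x else x) := by
  set f : A → A := fun x => if P x then 2 • y - x else x with hf
  have hfy : f y = y := by simp [hf, two_nsmul]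
  obtain ⟨l, r, rfl⟩ := List.append_of_mem hy
  calc doubled (l ++ y :: r)
    _ ≈ₕ doubled (y :: (l ++ r)) := doubled_of_perm List.perm_middle
    _ ≈ₕ doubled (y :: (l ++ r).map f) := doubled_cons_map_reflect y (l ++ r) P
    _ ≈ₕ doubled ((l ++ y :: r).map f) := doubled_of_perm <| by
      simpa only [List.map_append, List.map_cons, hfy] using List.perm_middle.symm

end ListHurwitzEquiv

theorem alternatingSum_replicate_two_mul (k : ℕ) (a : A) :
    (List.replicate (2 * k) a).alternatingSum = 0 := by
  induction k with
  | zero => rfl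
  | succ k ih => simp [mul_add, List.replicate_succ, ih]

theorem alternatingSum_replicate_append_replicate (r s : ℕ) (a b : A) :
    (List.replicate (2 * r) a ++ List.replicate (2 * s) b).alternatingSum = 0 := by
  simp [List.alternatingSum_append, alternatingSum_replicate_two_mul]

end AddCommGroup

section Int

local infix:50 " ≈ₕ " => ListHurwitzEquiv

namespace ListHurwitzEquiv

theorem exists_pair_cons (x y z : ℤ) (r : List ℤ) :
    ∃ a c, x :: y :: z :: r ≈ₕ a :: a :: c :: r := by
  by_cases hxy : x = y
  · exact ⟨x, z, by rw [hxy]⟩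
  by_cases hyz : y = z
  · exact ⟨y, x, by rw [← hyz]; exact (pair_cons_comm y x r).symm⟩
  -- Moving across the shorter gap replaces the longer one by the difference of the two;
  -- whether the gaps have the same direction decides between a move and its inverse.
  by_cases (y - x).natAbs ≤ (z - y).natAbs <;> by_cases 0 < y - x ↔ 0 < z - y
  · obtain ⟨a, c, h⟩ := exists_pair_cons y (2 • y - x) z r
    exact ⟨a, c, (move_head x y _).trans h⟩
  · obtain ⟨a, c, h⟩ := exists_pair_cons (2 • x - y) x z r
    exact ⟨a, c, (inv_move_head x y _).trans h⟩
  · obtain ⟨a, c, h⟩ := exists_pair_cons x (2 • y - z) y r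
    exact ⟨a, c, ((inv_move_head y z _).cons x).trans h⟩
  · obtain ⟨a, c, h⟩ := exists_pair_cons x z (2 • z - y) r
    exact ⟨a, c, ((move_head y z _).cons x).trans h⟩
termination_by (y - x).natAbs + (z - y).natAbs
decreasing_by all_goals simp only [two_nsmul]; omega

theorem exists_doubled_of_alternatingSum_eq_zero (l : List ℤ) (hlen : Even l.length)
    (hsum : l.alternatingSum = 0) : ∃ p, l ≈ₕ doubled p := by
  match l with
  | [] => exact ⟨[], refl _⟩
  | [x] => simp at hlen
  | [x, y] =>
    obtain rfl : x = y := by simpa [sub_eq_zero] using hsum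
    exact ⟨[x], refl _⟩
  | x :: y :: z :: r =>
    obtain ⟨a, c, hpair⟩ := exists_pair_cons x y z r
    have hsum' : (c :: r).alternatingSum = 0 := by
      rw [hpair.alternatingSum_eq] at hsum
      simpa using hsum
    have hlen' : Even (c :: r).length := by simpa [Nat.even_add_one] using hlen
    obtain ⟨p, hp⟩ := exists_doubled_of_alternatingSum_eq_zero (c :: r) hlen' hsum'
    exact ⟨a :: p, hpair.trans ((hp.cons a).cons a)⟩
termination_by l.length

theorem exists_doubled_replicate_of_mem_Icc {lo hi : ℤ} (hlt : lo < hi) {p : List ℤ}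
    (hp : ∀ x ∈ p, x ∈ Set.Icc lo hi) :
    ∃ a b r s, doubled p ≈ₕ doubled (List.replicate r a ++ List.replicate s b) := by
  by_cases hinner : ∃ y ∈ p, y ∈ Set.Ioo lo hi
  · obtain ⟨y, hy, hlo, hhi⟩ := hinner
    rcases le_total (y - lo) (hi - y) with hbelow | habove
    · have hfold : ∀ x ∈ p.map (fun x => if x < y then 2 • y - x else x), x ∈ Set.Icc y hi := by
        simp only [List.forall_mem_map, Set.mem_Icc, two_nsmul] at hp ⊢
        intro x hx
        have := hp x hx
        split_ifs <;> omega
      obtain ⟨a, b, r, s, h⟩ := exists_doubled_replicate_of_mem_Icc hhi hfold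
      exact ⟨a, b, r, s, (doubled_map_reflect hy _).trans h⟩
    · have hfold : ∀ x ∈ p.map (fun x => if y < x then 2 • y - x else x), x ∈ Set.Icc lo y := by
        simp only [List.forall_mem_map, Set.mem_Icc, two_nsmul] at hp ⊢
        intro x hx
        have := hp x hx
        split_ifs <;> omega
      obtain ⟨a, b, r, s, h⟩ := exists_doubled_replicate_of_mem_Icc hlo hfold
      exact ⟨a, b, r, s, (doubled_map_reflect hy _).trans h⟩
  · have hends : p ⊆ [lo, hi] := by
      intro x hx
      by_contra hx'
      simp only [List.mem_cons, List.not_mem_nil, or_false, not_or] at hx'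
      exact hinner ⟨x, hx, (hp x hx).1.lt_of_ne' hx'.1, (hp x hx).2.lt_of_ne hx'.2⟩
    exact ⟨lo, hi, p.count lo, p.count hi,
      doubled_of_perm ((List.perm_replicate_append_replicate hlt.ne).2 ⟨rfl, rfl, hends⟩)⟩
termination_by (hi - lo).toNat

theorem exists_doubled_replicate (p : List ℤ) :
    ∃ a b r s, doubled p ≈ₕ doubled (List.replicate r a ++ List.replicate s b) := by
  obtain ⟨lo, hlo⟩ := p.finite_toSet.bddBelow
  obtain ⟨hi, hhi⟩ := p.finite_toSet.bddAbove
  have hlt : lo < max hi (lo + 1) := by omega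
  exact exists_doubled_replicate_of_mem_Icc hlt fun x hx =>
    ⟨hlo hx, (hhi hx).trans (le_max_left _ _)⟩

end ListHurwitzEquiv

theorem alternatingSum_eq_zero_iff_exists_listHurwitzEquiv {l : List ℤ} (hlen : Even l.length) :
    l.alternatingSum = 0 ↔
      ∃ a b r s, l ≈ₕ List.replicate (2 * r) a ++ List.replicate (2 * s) b := by
  constructor
  · intro hsum
    obtain ⟨p, hp⟩ := ListHurwitzEquiv.exists_doubled_of_alternatingSum_eq_zero l hlen hsum
    obtain ⟨a, b, r, s, h⟩ := ListHurwitzEquiv.exists_doubled_replicate p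
    exact ⟨a, b, r, s, doubled_replicate_append_replicate r s a b ▸ hp.trans h⟩
  · rintro ⟨a, b, r, s, h⟩
    rw [h.alternatingSum_eq, alternatingSum_replicate_append_replicate]

theorem altSum_eq_alternatingSum_ofFn {n : ℕ} (v : Fin n → ℤ) :
    altSum v = (List.ofFn v).alternatingSum := by
  induction n with
  | zero => simp [altSum]
  | succ n ih =>
    rw [List.ofFn_succ, List.alternatingSum_cons, ← ih, altSum, altSum, Fin.sum_univ_succ,
      sub_eq_add_neg, ← Finset.sum_neg_distrib]
    simp [pow_succ]

theorem IsHurwitzMove.listHurwitzMove_ofFn {n : ℕ} {v w : Fin n → ℤ} (h : IsHurwitzMove v w) :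
    ListHurwitzMove (List.ofFn v) (List.ofFn w) := by
  obtain ⟨i, hi, hfst, hsnd, hrest⟩ := h
  have htake : (List.ofFn w).take i = (List.ofFn v).take i := by
    refine List.ext_getElem (by simp) fun j hj _ => ?_
    simp only [List.length_take, List.length_ofFn] at hj
    simpa using hrest ⟨j, by omega⟩ (by dsimp only; omega) (by dsimp only; omega)
  have hdrop : (List.ofFn w).drop (i + 2) = (List.ofFn v).drop (i + 2) := by
    refine List.ext_getElem (by simp) fun j hj _ => ?_
    simp only [List.length_drop, List.length_ofFn] at hj
    simpa using hrest ⟨i + 2 + j, by omega⟩ (by dsimp only; omega) (by dsimp only; omega)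
  rw [ofFn_eq_take_append_cons_cons_drop v hi, ofFn_eq_take_append_cons_cons_drop w hi, htake,
    hdrop, hfst, hsnd]
  exact .mk _ _ _ _

theorem isHurwitzMove_of_listHurwitzMove_ofFn {n : ℕ} {v w : Fin n → ℤ}
    (h : ListHurwitzMove (List.ofFn v) (List.ofFn w)) : IsHurwitzMove v w := by
  generalize hp : List.ofFn v = p, hq : List.ofFn w = q at h
  obtain ⟨l, r, a, b⟩ := h
  have hlen : n = l.length + (r.length + 2) := by simpa using congrArg List.length hp
  have hv (j : ℕ) (hj : j < n) : v ⟨j, hj⟩ = (l ++ a :: b :: r)[j]'(by grind) := by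
    simp only [← hp, List.getElem_ofFn]
  have hw (j : ℕ) (hj : j < n) :
      w ⟨j, hj⟩ = (l ++ b :: (2 • b - a) :: r)[j]'(by grind) := by
    simp only [← hq, List.getElem_ofFn]
  refine ⟨l.length, by omega, by simp [hv, hw], by simp [hv, hw], fun ⟨j, hj⟩ hfst hsnd => ?_⟩
  rw [hv, hw]
  rcases lt_or_ge j l.length with hleft | hright
  · simp [List.getElem_append_left hleft]
  · obtain ⟨t, rfl⟩ : ∃ t, j = l.length + (t + 2) := by
      dsimp only at hfst hsnd
      exact ⟨j - l.length - 2, by omega⟩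
    simp [List.getElem_append_right]

theorem HurwitzEquiv.symm {n : ℕ} {v w : Fin n → ℤ} (h : HurwitzEquiv v w) : HurwitzEquiv w v := by
  induction h with
  | refl => exact .refl
  | tail _ hmove ih => exact .head hmove.symm ih

theorem HurwitzEquiv.listHurwitzEquiv_ofFn {n : ℕ} {v w : Fin n → ℤ} (h : HurwitzEquiv v w) :
    List.ofFn v ≈ₕ List.ofFn w := by
  induction h with
  | refl => rfl
  | tail _ hmove ih =>
    rcases hmove with hmove | hmove
    · exact ih.trans (.rel _ _ hmove.listHurwitzMove_ofFn)
    · exact ih.trans (.symm (.rel _ _ hmove.listHurwitzMove_ofFn))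

theorem hurwitzEquiv_of_listHurwitzEquiv_ofFn {n : ℕ} {v w : Fin n → ℤ}
    (h : List.ofFn v ≈ₕ List.ofFn w) : HurwitzEquiv v w := by
  generalize hp : List.ofFn v = p, hq : List.ofFn w = q at h
  induction h generalizing v w with
  | rel _ _ hmove =>
    exact .single (.inl (isHurwitzMove_of_listHurwitzMove_ofFn (hp ▸ hq ▸ hmove)))
  | refl =>
    obtain rfl := List.ofFn_injective (hp.trans hq.symm)
    exact .refl
  | symm _ _ _ ih => exact (ih hq hp).symm
  | trans _ q' _ hpq' _ ih₁ ih₂ =>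
    obtain rfl : n = q'.length := by simpa [← hp] using ListHurwitzEquiv.length_eq hpq'
    exact (ih₁ hp (List.ofFn_get q')).trans (ih₂ (List.ofFn_get q') hq)

end Int

/-- A vector v ∈ ℤ^{2m} satisfies Δ(v) = 0 iff it is Hurwitz equivalent to
(a,…,a, b,…,b) with 2r entries a and 2s entries b, where r + s = m. -/
theorem stmt_4 (m : ℕ) (hm : 1 ≤ m) (v : Fin (2 * m) → ℤ) :
    altSum v = 0 ↔
      ∃ (a b : ℤ) (r s : ℕ), r + s = m ∧
        HurwitzEquiv v (fun j => if (j : ℕ) < 2 * r then a else b) := by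
  rw [altSum_eq_alternatingSum_ofFn,
    alternatingSum_eq_zero_iff_exists_listHurwitzEquiv (by simp)]
  constructor
  · rintro ⟨a, b, r, s, h⟩
    have hrs : r + s = m := by
      have hlen := h.length_eq
      simp only [List.length_ofFn, List.length_append, List.length_replicate] at hlen
      omega
    refine ⟨a, b, r, s, hrs, hurwitzEquiv_of_listHurwitzEquiv_ofFn ?_⟩
    rwa [ofFn_ite_val_lt (l := 2 * s) (by omega)]
  · rintro ⟨a, b, r, s, hrs, h⟩
    refine ⟨a, b, r, s, ?_⟩
    rw [← ofFn_ite_val_lt (n := 2 * m) (by omega)]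
    exact h.listHurwitzEquiv_ofFn
end

section
/- Let m ≥ 1 and let v, w ∈ ℤ^{2m} be nontrivial vectors. Then v and w are Hurwitz equivalent if and only if Δ(v) = Δ(w), d(v) = d(w), and M(v) = M(w). -/
/-!
A pair of equal adjacent entries commutes with everything under Hurwitz moves and can be reflected
in any other entry. On triples the moves act as `SL₂(ℤ)` on the two successive differences, so the
Euclidean algorithm turns every triple into a pair of equal entries followed by a single one. A
tuple of even length is thus equivalent to `(p, p - δ, x₁, x₁, …, xₘ, xₘ)`, with `δ` its
alternating sum.

If one of the pairs is `p + g`, reflecting in `p` and in `p + g` changes the other pairs by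
multiples of `2g`, and a pair that is not congruent to `p` modulo `g` leads to a smaller `g`. The
descent ends with `g = d`, where only the residues of the remaining pairs modulo `2d` matter. The
base `p` can always be shifted by `2d`. It can be shifted by `d` if `δ / d` is even, or if some
remaining pair is congruent to `p` modulo `2d`; when `δ / d` is odd and the bases of two tuples
with the same `M` differ by an odd multiple of `d`, equality of `M` provides such a pair.
-/

namespace HurwitzEquiv

/-- The elementary Hurwitz move on tuples written as lists, where concatenation is available. -/
inductive ListMove : List ℤ → List ℤ → Prop
  | mk (l₁ : List ℤ) (a b : ℤ) (l₂ : List ℤ) :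
      ListMove (l₁ ++ a :: b :: l₂) (l₁ ++ b :: (2 * b - a) :: l₂)

/-- Hurwitz equivalence of tuples written as lists. -/
def ListEquiv : List ℤ → List ℤ → Prop := Relation.EqvGen ListMove

/-- All entries of `l` are congruent modulo `k`; for `k = 0` this says that `l` is constant. -/
def AllModEq (k : ℤ) (l : List ℤ) : Prop := ∀ x ∈ l, ∀ y ∈ l, x ≡ y [ZMOD k]

/-- `d` is, up to sign, the greatest common divisor of the differences of entries of `l`,
expressed by its universal property. -/
def IsDiffGcd (d : ℤ) (l : List ℤ) : Prop := ∀ k, AllModEq k l ↔ k ∣ d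

/-- The residues modulo `2 * d` of the entries of `l`; taken up to permutation, they encode the
multiset `M`. -/
def residues (d : ℤ) (l : List ℤ) : List ℤ := l.map (· % (2 * d))

/-- The list in which every entry of `xs` is written twice in a row. -/
def double (xs : List ℤ) : List ℤ := xs.flatMap fun x => [x, x]

/-- The form `(p, p - δ, x₁, x₁, …, xₘ, xₘ)` to which tuples of even length are reduced. Its
alternating sum is `δ`. -/
def pairForm (δ p : ℤ) (xs : List ℤ) : List ℤ := p :: (p - δ) :: double xs

/-- The triple `(a, b, c)` with `a - b + c = e`, `b - a = s` and `c - b = t`. In these coordinates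
the braid group on three strands acts on `(s, t)` through `SL₂(ℤ)` and fixes `e`. -/
def tripleForm (e s t : ℤ) : List ℤ := [e - t, e - t + s, e + s]

theorem ListMove.listEquiv {l l' : List ℤ} (h : ListMove l l') : ListEquiv l l' :=
  Relation.EqvGen.rel _ _ h

namespace ListEquiv

variable {l l' l'' : List ℤ}

instance : IsEquiv (List ℤ) ListEquiv := inferInstanceAs (IsEquiv _ (Relation.EqvGen ListMove))

theorem refl (l : List ℤ) : ListEquiv l l := Relation.EqvGen.refl l

theorem symm (h : ListEquiv l l') : ListEquiv l' l := Relation.EqvGen.symm _ _ h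

theorem trans (h : ListEquiv l l') (h' : ListEquiv l' l'') : ListEquiv l l'' :=
  Relation.EqvGen.trans _ _ _ h h'

theorem map_rel {α : Type*} {r : α → α → Prop} [IsEquiv α r] {f : List ℤ → α}
    (hf : ∀ l l', ListMove l l' → r (f l) (f l')) (h : ListEquiv l l') : r (f l) (f l') := by
  induction h with
  | rel l l' h => exact hf l l' h
  | refl l => exact refl_of r (f l)
  | symm _ _ _ ih => exact symm_of r ih
  | trans _ _ _ _ _ ih ih' => exact trans_of r ih ih'

theorem append_left (t : List ℤ) (h : ListEquiv l l') : ListEquiv (t ++ l) (t ++ l') := by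
  refine map_rel (f := (t ++ ·)) ?_ h
  rintro _ _ ⟨l₁, a, b, l₂⟩
  simpa using (ListMove.mk (t ++ l₁) a b l₂).listEquiv

theorem append_right (t : List ℤ) (h : ListEquiv l l') : ListEquiv (l ++ t) (l' ++ t) := by
  refine map_rel (f := (· ++ t)) ?_ h
  rintro _ _ ⟨l₁, a, b, l₂⟩
  simpa using (ListMove.mk l₁ a b (l₂ ++ t)).listEquiv

theorem cons (a : ℤ) (h : ListEquiv l l') : ListEquiv (a :: l) (a :: l') := h.append_left [a]

theorem of_forall_succ {f : ℤ → List ℤ} (h : ∀ k, ListEquiv (f k) (f (k + 1))) (j k : ℤ) :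
    ListEquiv (f j) (f k) := by
  rcases le_total j k with hjk | hkj
  · exact Int.rel_of_forall_rel_succ_of_le ListEquiv h hjk
  · exact (Int.rel_of_forall_rel_succ_of_le ListEquiv h hkj).symm

theorem length_eq (h : ListEquiv l l') : l.length = l'.length := by
  refine map_rel (r := Eq) (f := List.length) ?_ h
  rintro _ _ ⟨l₁, a, b, l₂⟩
  simp

theorem alternatingSum_eq (h : ListEquiv l l') : l.alternatingSum = l'.alternatingSum := by
  refine map_rel (r := Eq) (f := List.alternatingSum) ?_ h
  rintro _ _ ⟨l₁, a, b, l₂⟩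
  have hab : (a :: b :: l₂).alternatingSum = (b :: (2 * b - a) :: l₂).alternatingSum := by
    simp only [List.alternatingSum_cons]
    ring
  rw [List.alternatingSum_append, List.alternatingSum_append, hab]

end ListEquiv

section Congruences

variable {d k : ℤ} {l l' : List ℤ}

theorem allModEq_iff_of_mem {c : ℤ} (hc : c ∈ l) : AllModEq k l ↔ ∀ x ∈ l, x ≡ c [ZMOD k] :=
  ⟨fun h x hx => h x hx c hc, fun h x hx y hy => (h x hx).trans (h y hy).symm⟩

theorem ListMove.allModEq_iff (h : ListMove l l') : AllModEq k l ↔ AllModEq k l' := by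
  obtain ⟨l₁, a, b, l₂⟩ := h
  have hab : 2 * b - a ≡ b [ZMOD k] ↔ a ≡ b [ZMOD k] := by
    rw [Int.modEq_iff_dvd, Int.modEq_comm, Int.modEq_iff_dvd]
    ring_nf
  rw [allModEq_iff_of_mem (c := b) (by simp), allModEq_iff_of_mem (c := b) (by simp)]
  simp only [List.forall_mem_append, List.forall_mem_cons, hab, Int.ModEq.refl]
  tauto

theorem ListMove.residues_perm (h : ListMove l l') (hl : AllModEq k l) :
    (residues k l).Perm (residues k l') := by
  obtain ⟨l₁, a, b, l₂⟩ := h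
  have hba : b ≡ a [ZMOD k] := hl b (by simp) a (by simp)
  have hres : 2 * b - a ≡ a [ZMOD 2 * k] := by
    simpa [two_mul] using (hba.mul_left' (c := 2)).sub_right a
  simpa [residues, hres.eq] using (List.Perm.swap _ _ _).append_left _

theorem ListEquiv.allModEq_iff (h : ListEquiv l l') : AllModEq k l ↔ AllModEq k l' :=
  h.map_rel (r := Iff) fun _ _ => ListMove.allModEq_iff

theorem ListEquiv.residues_perm (h : ListEquiv l l') (hl : AllModEq k l) :
    (residues k l).Perm (residues k l') := by
  induction h with
  | rel _ _ h => exact h.residues_perm hl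
  | refl => rfl
  | symm _ _ h ih => exact (ih ((ListEquiv.allModEq_iff h).2 hl)).symm
  | trans _ _ _ h _ ih ih' => exact (ih hl).trans (ih' ((ListEquiv.allModEq_iff h).1 hl))

theorem IsDiffGcd.allModEq (h : IsDiffGcd d l) : AllModEq d l := (h d).2 dvd_rfl

theorem IsDiffGcd.congr (h : IsDiffGcd d l) (hl : ListEquiv l l') : IsDiffGcd d l' :=
  fun k => hl.allModEq_iff.symm.trans (h k)

theorem IsDiffGcd.eq_of_nonneg (h : IsDiffGcd d l) (h' : IsDiffGcd k l) (hd : 0 ≤ d)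
    (hk : 0 ≤ k) : d = k :=
  Int.dvd_antisymm hd hk ((h' d).1 h.allModEq) ((h k).1 h'.allModEq)

theorem AllModEq.modEq_of_residues_perm (hl : AllModEq d l)
    (h : (residues d l).Perm (residues d l')) {x y : ℤ} (hx : x ∈ l) (hy : y ∈ l') :
    x ≡ y [ZMOD d] := by
  obtain ⟨z, hz, hzy⟩ := List.mem_map.1 (h.mem_iff.2 (List.mem_map_of_mem hy))
  exact (hl x hx z hz).trans (Int.ModEq.of_mul_left 2 hzy)

end Congruences

section Doubling

variable {x : ℤ} {xs ys : List ℤ}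

@[simp] theorem double_nil : double [] = [] := rfl

@[simp] theorem double_cons (x : ℤ) (xs : List ℤ) : double (x :: xs) = x :: x :: double xs := rfl

@[simp] theorem double_append (xs ys : List ℤ) : double (xs ++ ys) = double xs ++ double ys :=
  List.flatMap_append

@[simp] theorem mem_double : x ∈ double xs ↔ x ∈ xs := by simp [double]

theorem count_double (x : ℤ) (xs : List ℤ) : (double xs).count x = 2 * xs.count x := by
  induction xs with
  | nil => rfl
  | cons y xs ih => simp only [double_cons, List.count_cons, ih]; split <;> omega

@[simp] theorem residues_cons (d x : ℤ) (xs : List ℤ) :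
    residues d (x :: xs) = x % (2 * d) :: residues d xs := rfl

@[simp] theorem residues_double (d : ℤ) (xs : List ℤ) :
    residues d (double xs) = double (residues d xs) := by
  simp [residues, double, List.map_flatMap, List.flatMap_map]

theorem perm_of_double_perm (h : (double xs).Perm (double ys)) : xs.Perm ys := by
  refine List.perm_iff_count.2 fun x => ?_
  have hx := h.count_eq x
  rw [count_double, count_double] at hx
  omega

theorem alternatingSum_double (xs : List ℤ) : (double xs).alternatingSum = 0 := by
  induction xs with
  | nil => rfl
  | cons x xs ih => simp [List.alternatingSum_cons, ih]

theorem alternatingSum_pairForm (δ p : ℤ) (xs : List ℤ) :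
    (pairForm δ p xs).alternatingSum = δ := by
  simp [pairForm, List.alternatingSum_cons, alternatingSum_double]

end Doubling

section ShortMoves

theorem listEquiv_move (a b : ℤ) (l : List ℤ) :
    ListEquiv (a :: b :: l) (b :: (2 * b - a) :: l) :=
  (ListMove.mk [] a b l).listEquiv

theorem listEquiv_move_inv (a b : ℤ) (l : List ℤ) :
    ListEquiv (a :: b :: l) ((2 * a - b) :: a :: l) := by
  simpa using (listEquiv_move (2 * a - b) a l).symm

theorem listEquiv_translate (a s : ℤ) (l : List ℤ) (k : ℤ) :
    ListEquiv (a :: (a + s) :: l) ((a + k * s) :: (a + k * s + s) :: l) := by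
  convert ListEquiv.of_forall_succ (f := fun k => (a + k * s) :: (a + k * s + s) :: l)
    (fun k => ?_) 0 k using 2
  · ring
  · ring_nf
  · convert listEquiv_move (a + k * s) (a + k * s + s) l using 2
    · ring
    · congr 1; ring

theorem tripleForm_add_mul_left (e s t k : ℤ) :
    ListEquiv (tripleForm e s t) (tripleForm e s (t + k * s)) := by
  unfold tripleForm
  convert listEquiv_translate (e - t) s [e + s] (-k) using 2
  all_goals ring_nf

theorem tripleForm_add_mul_right (e s t k : ℤ) :
    ListEquiv (tripleForm e s t) (tripleForm e (s + k * t) t) := by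
  unfold tripleForm
  convert (listEquiv_translate (e - t + s) t [] k).cons (e - t) using 2
  all_goals ring_nf

theorem tripleForm_rotate (e s t : ℤ) : ListEquiv (tripleForm e s t) (tripleForm e t (-s)) := by
  calc ListEquiv (tripleForm e s t) (tripleForm e s (t - s)) := by
        simpa [sub_eq_add_neg] using tripleForm_add_mul_left e s t (-1)
    ListEquiv _ (tripleForm e t (t - s)) := by
        simpa using tripleForm_add_mul_right e s (t - s) 1
    ListEquiv _ (tripleForm e t (-s)) := by
        simpa [sub_eq_add_neg] using tripleForm_add_mul_left e t (t - s) (-1)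

-- The Euclidean algorithm, carried out by `SL₂(ℤ)` acting on `(s, t)`.
theorem tripleForm_euclid (e s t : ℤ) {g : ℤ} (hg : g.natAbs = Int.gcd s t) :
    ListEquiv (tripleForm e s t) (tripleForm e 0 g) := by
  induction hn : s.natAbs using Nat.strong_induction_on generalizing s t with
  | _ n ih =>
  rcases eq_or_ne s 0 with rfl | hs
  · rw [Int.gcd_zero_left] at hg
    rcases Int.natAbs_eq_natAbs_iff.1 hg with rfl | rfl
    · exact .refl _
    · simpa using (tripleForm_rotate e 0 t).trans (tripleForm_rotate e t (-0))
  · have hlt : (t % s).natAbs < n := by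
      have := Int.emod_nonneg t hs
      have := Int.emod_lt t hs
      omega
    calc ListEquiv (tripleForm e s t) (tripleForm e s (t % s)) := by
          convert tripleForm_add_mul_left e s t (-(t / s)) using 2
          rw [Int.emod_def]
          ring
      ListEquiv _ (tripleForm e (t % s) (-s)) := tripleForm_rotate e s (t % s)
      ListEquiv _ (tripleForm e 0 g) := by
          refine ih _ hlt (t % s) (-s) ?_ rfl
          rw [hg, Int.gcd_neg, Int.gcd_emod, Int.gcd_comm]

theorem triple_listEquiv (a b c : ℤ) {g : ℤ} (hg : g.natAbs = Int.gcd (b - a) (c - b)) :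
    ListEquiv [a, b, c] [a - b + c + g, a - b + c + g, a - b + c] := by
  have h := tripleForm_euclid (a - b + c) (b - a) (c - b) (g := -g) (by simpa using hg)
  simp only [tripleForm] at h
  convert h using 3 <;> ring_nf

end ShortMoves

section Pairs

theorem pair_comm (l : List ℤ) (a : ℤ) (t : List ℤ) :
    ListEquiv (l ++ a :: a :: t) (a :: a :: (l ++ t)) := by
  induction l with
  | nil => exact .refl _
  | cons x l ih =>
    calc ListEquiv (x :: (l ++ a :: a :: t)) (x :: a :: a :: (l ++ t)) := ih.cons x
      ListEquiv _ (a :: (2 * a - x) :: a :: (l ++ t)) := listEquiv_move x a _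
      ListEquiv _ (a :: a :: x :: (l ++ t)) := by
        simpa using (listEquiv_move (2 * a - x) a (l ++ t)).cons a

theorem pair_reflect (z : ℤ) (l : List ℤ) (a : ℤ) (t : List ℤ) :
    ListEquiv (z :: (l ++ a :: a :: t)) (z :: (l ++ (2 * z - a) :: (2 * z - a) :: t)) := by
  have hadj : ListEquiv (z :: a :: a :: (l ++ t))
      (z :: (2 * z - a) :: (2 * z - a) :: (l ++ t)) :=
    calc ListEquiv (z :: a :: a :: (l ++ t)) ((2 * z - a) :: z :: a :: (l ++ t)) :=
          listEquiv_move_inv z a _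
      ListEquiv _ ((2 * z - a) :: (2 * z - a) :: z :: (l ++ t)) :=
          (listEquiv_move_inv z a _).cons _
      ListEquiv _ (z :: (2 * z - a) :: (2 * z - a) :: (l ++ t)) :=
          (pair_comm [z] (2 * z - a) (l ++ t)).symm
  exact ((pair_comm l a t).cons z).trans (hadj.trans ((pair_comm l (2 * z - a) t).cons z).symm)

theorem double_listEquiv_of_perm {xs ys : List ℤ} (h : xs.Perm ys) :
    ListEquiv (double xs) (double ys) := by
  induction h with
  | nil => exact .refl _
  | cons x _ ih => exact (ih.cons x).cons x
  | swap x y l => exact pair_comm [y, y] x (double l)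
  | trans _ _ ih ih' => exact ih.trans ih'

end Pairs

section PairForms

variable {δ p g : ℤ} {xs ys : List ℤ}

theorem pairForm_listEquiv_of_perm (h : xs.Perm ys) :
    ListEquiv (pairForm δ p xs) (pairForm δ p ys) :=
  ((double_listEquiv_of_perm h).cons _).cons _

theorem pairForm_translate (δ p : ℤ) (xs : List ℤ) (k : ℤ) :
    ListEquiv (pairForm δ p xs) (pairForm δ (p + k * δ) xs) := by
  unfold pairForm
  convert listEquiv_translate p (-δ) (double xs) (-k) using 3 <;> ring

theorem exists_listEquiv_pairForm (m : ℕ) {l : List ℤ} (hl : l.length = 2 * (m + 1)) :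
    ∃ δ p xs, xs.length = m ∧ ListEquiv l (pairForm δ p xs) := by
  induction m generalizing l with
  | zero =>
    obtain ⟨a, b, rfl⟩ := List.length_eq_two.1 hl
    exact ⟨a - b, a, [], rfl, by simpa [pairForm] using ListEquiv.refl _⟩
  | succ m ih =>
    match l, hl with
    | a :: b :: c :: r, hl =>
      obtain ⟨δ, p, xs, hxs, h⟩ := ih (l := (a - b + c) :: r) 
        (by simp only [List.length_cons] at hl ⊢; omega)
      let y := a - b + c + Int.gcd (b - a) (c - b)
      refine ⟨δ, p, y :: xs, by simp [hxs], ?_⟩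
      calc ListEquiv (a :: b :: c :: r) (y :: y :: (a - b + c) :: r) :=
            (triple_listEquiv a b c (Int.natAbs_natCast _)).append_right r
        ListEquiv _ (y :: y :: pairForm δ p xs) := (h.cons y).cons y
        ListEquiv _ (pairForm δ p (y :: xs)) := (pair_comm [p, p - δ] y (double xs)).symm

theorem pairForm_reflect_base (δ p : ℤ) (l : List ℤ) (x : ℤ) (t : List ℤ) :
    ListEquiv (pairForm δ p (l ++ x :: t)) (pairForm δ p (l ++ (2 * p - x) :: t)) := by
  simpa [pairForm] using pair_reflect p ((p - δ) :: double l) x (double t)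

theorem pairForm_reflect_head (δ p z : ℤ) (l : List ℤ) (x : ℤ) (t : List ℤ) :
    ListEquiv (pairForm δ p (z :: (l ++ x :: t)))
      (pairForm δ p (z :: (l ++ (2 * z - x) :: t))) := by
  simpa [pairForm] using ((pair_reflect z (z :: double l) x (double t)).cons (p - δ)).cons p

-- Composing the reflections in `p` and in `p + g` translates `x` by `2 * g`.
theorem pairForm_replace_of_modEq {x y : ℤ} (h : x ≡ y [ZMOD 2 * g]) (l t : List ℤ) :
    ListEquiv (pairForm δ p ((p + g) :: (l ++ x :: t)))
      (pairForm δ p ((p + g) :: (l ++ y :: t))) := by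
  obtain ⟨k, hk⟩ := h.dvd
  convert ListEquiv.of_forall_succ
    (f := fun k => pairForm δ p ((p + g) :: (l ++ (x + 2 * g * k) :: t))) (fun k => ?_) 0 k using 5
  · ring
  · linear_combination hk
  · rw [show x + 2 * g * (k + 1) = 2 * (p + g) - (2 * p - (x + 2 * g * k)) by ring]
    exact (pairForm_reflect_base δ p ((p + g) :: l) (x + 2 * g * k) t).trans
      (pairForm_reflect_head δ p (p + g) l (2 * p - (x + 2 * g * k)) t)

theorem pairForm_listEquiv_residues (δ p d : ℤ) (l xs : List ℤ) :
    ListEquiv (pairForm δ p ((p + d) :: (l ++ xs)))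
      (pairForm δ p ((p + d) :: (l ++ residues d xs))) := by
  induction xs generalizing l with
  | nil => exact .refl _
  | cons x xs ih =>
    have hx : x ≡ x % (2 * d) [ZMOD 2 * d] := (Int.mod_modEq x (2 * d)).symm
    have hxs := ih (l ++ [x % (2 * d)])
    rw [List.append_assoc, List.append_assoc] at hxs
    exact (pairForm_replace_of_modEq hx l xs).trans hxs

theorem pairForm_listEquiv_of_residues_perm {d : ℤ} (h : (residues d xs).Perm (residues d ys)) :
    ListEquiv (pairForm δ p ((p + d) :: xs)) (pairForm δ p ((p + d) :: ys)) :=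
  calc ListEquiv _ (pairForm δ p ((p + d) :: residues d xs)) :=
        pairForm_listEquiv_residues δ p d [] xs
    ListEquiv _ (pairForm δ p ((p + d) :: residues d ys)) :=
        pairForm_listEquiv_of_perm (h.cons _)
    ListEquiv _ (pairForm δ p ((p + d) :: ys)) :=
        (pairForm_listEquiv_residues δ p d [] ys).symm

theorem pairForm_gcd_move (δ p x : ℤ) (xs : List ℤ) (hg : g.natAbs = Int.gcd δ (x - p)) :
    ListEquiv (pairForm δ p (x :: xs)) (pairForm δ (x + δ) ((x + δ + g) :: xs)) := by
  have hgcd : g.natAbs = Int.gcd (p - δ - p) (x - (p - δ)) := by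
    rw [hg, show p - δ - p = -δ by ring, show x - (p - δ) = x - p + δ by ring, Int.neg_gcd,
      Int.gcd_add_self_right]
  have htriple := (triple_listEquiv p (p - δ) x hgcd).append_right (x :: double xs)
  rw [show p - (p - δ) + x = x + δ by ring] at htriple
  simpa [pairForm] using htriple.trans (pair_comm [x + δ, x] (x + δ + g) (double xs)).symm

theorem pairForm_step (hg : g ∣ δ) (p : ℤ) (xs : List ℤ) :
    ListEquiv (pairForm δ p ((p + g) :: xs))
      (pairForm δ (p + g + δ) ((p + g + δ + g) :: xs)) :=
  pairForm_gcd_move δ p (p + g) xs (by simpa using (Int.gcd_eq_natAbs_right hg).symm)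

theorem pairForm_neg_gap (δ p g : ℤ) (xs : List ℤ) :
    ListEquiv (pairForm δ p ((p + g) :: xs)) (pairForm δ p ((p + -g) :: xs)) := by
  have h := pairForm_reflect_base δ p [] (p + g) xs
  rwa [show 2 * p - (p + g) = p + -g by ring] at h

-- A step with gap `g` followed by the inverse of a step with gap `-g`.
theorem pairForm_shift_two_mul (hg : g ∣ δ) (p : ℤ) (xs : List ℤ) :
    ListEquiv (pairForm δ p ((p + g) :: xs))
      (pairForm δ (p + 2 * g) ((p + 2 * g + g) :: xs)) := by
  have hneg := pairForm_step (neg_dvd.2 hg) (p + 2 * g) xs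
  rw [show p + 2 * g + -g + δ = p + g + δ by ring] at hneg
  calc ListEquiv _ (pairForm δ (p + g + δ) ((p + g + δ + g) :: xs)) := pairForm_step hg p xs
    ListEquiv _ (pairForm δ (p + g + δ) ((p + g + δ + -g) :: xs)) := pairForm_neg_gap ..
    ListEquiv _ (pairForm δ (p + 2 * g) ((p + 2 * g + -g) :: xs)) := hneg.symm
    ListEquiv _ _ := (pairForm_neg_gap ..).symm

theorem pairForm_shift_of_modEq {q : ℤ} (hg : g ∣ δ) (h : p ≡ q [ZMOD 2 * g]) (xs : List ℤ) :
    ListEquiv (pairForm δ p ((p + g) :: xs)) (pairForm δ q ((q + g) :: xs)) := by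
  obtain ⟨k, hk⟩ := h.dvd
  obtain rfl : q = p + 2 * g * k := by linear_combination hk
  convert ListEquiv.of_forall_succ
    (f := fun k => pairForm δ (p + 2 * g * k) ((p + 2 * g * k + g) :: xs)) (fun k => ?_) 0 k
    using 2
  · ring
  · ring_nf
  · rw [show p + 2 * g * (k + 1) = p + 2 * g * k + 2 * g by ring]
    exact pairForm_shift_two_mul hg (p + 2 * g * k) xs

end PairForms

section Descent

variable {δ p d : ℤ} {xs ys : List ℤ}

theorem allModEq_pairForm_iff {k : ℤ} :
    AllModEq k (pairForm δ p xs) ↔ k ∣ δ ∧ ∀ x ∈ xs, x ≡ p [ZMOD k] := by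
  rw [allModEq_iff_of_mem (c := p) (by simp [pairForm])]
  simp [pairForm, Int.modEq_iff_dvd]

theorem isDiffGcd_pairForm {g : ℤ} (hg : g ∣ δ) (hxs : ∀ x ∈ xs, x ≡ p [ZMOD g]) :
    IsDiffGcd g (pairForm δ p ((p + g) :: xs)) := by
  intro k
  rw [allModEq_pairForm_iff, List.forall_mem_cons]
  constructor
  · rintro ⟨-, hk, -⟩
    simpa [Int.modEq_iff_dvd] using hk
  · intro hk
    exact ⟨hk.trans hg, by simpa [Int.modEq_iff_dvd] using hk, fun x hx => (hxs x hx).of_dvd hk⟩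

theorem exists_modEq_natAbs_sub_lt {g : ℕ} (hg : 0 < g) {x : ℤ} (hx : ¬ x ≡ p [ZMOD g]) :
    ∃ y, x ≡ y [ZMOD 2 * g] ∧ y ≠ p ∧ (y - p).natAbs < g := by
  let r := Int.bmod (x - p) (2 * g)
  have hr : x - p ≡ r [ZMOD 2 * g] := by
    simpa [Int.ModEq, r] using (Int.bmod_emod (x := x - p) (m := 2 * g)).symm
  have hle : -(g : ℤ) ≤ r := by have := Int.le_bmod (x := x - p) (m := 2 * g) (by omega); omega
  have hlt : r < g := by have := Int.bmod_lt (x := x - p) (m := 2 * g) (by omega); omega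
  have hndvd : ¬ (g : ℤ) ∣ r := fun hdvd => hx <| by
    have hxp : x - p ≡ 0 [ZMOD g] :=
      (Int.ModEq.of_mul_left 2 hr).trans (Int.modEq_zero_iff_dvd.2 hdvd)
    simpa using hxp.add_right p
  have hne : r ≠ 0 := fun h => hndvd (h ▸ dvd_zero _)
  have hne_neg : r ≠ -g := fun h => hndvd (h ▸ (dvd_neg.2 dvd_rfl))
  exact ⟨r + p, by simpa using hr.add_right p, by omega, by omega⟩

theorem exists_smaller_gap {g : ℕ} (hg : 0 < g) {x : ℤ} (hx : x ∈ xs) (hxp : ¬ x ≡ p [ZMOD g]) :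
    ∃ g' : ℕ, 0 < g' ∧ g' < g ∧ (g' : ℤ) ∣ δ ∧ ∃ q ys,
      ListEquiv (pairForm δ p ((p + g) :: xs)) (pairForm δ q ((q + g') :: ys)) := by
  obtain ⟨y, hxy, hyp, hlt⟩ := exists_modEq_natAbs_sub_lt hg hxp
  have hyp' : y - p ≠ 0 := sub_ne_zero.2 hyp
  refine ⟨Int.gcd δ (y - p), Int.gcd_pos_of_ne_zero_right δ hyp',
    (Int.gcd_le_natAbs_right _ hyp').trans_lt hlt, Int.gcd_dvd_left .., y + δ,
    (p + g) :: xs.erase x, ?_⟩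
  calc ListEquiv _ (pairForm δ p ((p + g) :: x :: xs.erase x)) :=
        pairForm_listEquiv_of_perm ((List.perm_cons_erase hx).cons _)
    ListEquiv _ (pairForm δ p ((p + g) :: y :: xs.erase x)) :=
        pairForm_replace_of_modEq hxy [] (xs.erase x)
    ListEquiv _ (pairForm δ p (y :: (p + g) :: xs.erase x)) :=
        pairForm_listEquiv_of_perm (.swap ..)
    ListEquiv _ _ := pairForm_gcd_move δ p y _ (Int.natAbs_natCast _)

theorem exists_isDiffGcd_gap (g : ℕ) (hg : 0 < g) (hgδ : (g : ℤ) ∣ δ) (p : ℤ) (xs : List ℤ) :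
    ∃ g' : ℤ, 0 < g' ∧ ∃ q ys,
      ListEquiv (pairForm δ p ((p + g) :: xs)) (pairForm δ q ((q + g') :: ys)) ∧
      IsDiffGcd g' (pairForm δ q ((q + g') :: ys)) := by
  induction g using Nat.strong_induction_on generalizing p xs with
  | _ g ih =>
  by_cases hxs : ∀ x ∈ xs, x ≡ p [ZMOD g]
  · exact ⟨g, mod_cast hg, p, xs, .refl _, isDiffGcd_pairForm hgδ hxs⟩
  · push Not at hxs
    obtain ⟨x, hx, hxp⟩ := hxs
    obtain ⟨g', hg', hlt, hdvd, q, ys, h⟩ := exists_smaller_gap (δ := δ) hg hx hxp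
    obtain ⟨g'', hg'', q', ys', h', hgcd⟩ := ih g' hlt hg' hdvd q ys
    exact ⟨g'', hg'', q', ys', h.trans h', hgcd⟩

theorem exists_gcd_pos_of_isDiffGcd (hd : 0 < d) (hgcd : IsDiffGcd d (pairForm δ p xs))
    (hxs : xs ≠ []) : ∃ x ∈ xs, 0 < Int.gcd δ (x - p) := by
  by_contra! hzero
  simp only [Nat.le_zero, Int.gcd_eq_zero_iff] at hzero
  have hconst : AllModEq 0 (pairForm δ p xs) := by
    obtain ⟨x, hx⟩ := List.exists_mem_of_ne_nil xs hxs
    refine allModEq_pairForm_iff.2 ⟨zero_dvd_iff.2 (hzero x hx).1, fun y hy => ?_⟩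
    rw [sub_eq_zero.1 (hzero y hy).2]
  exact hd.ne' (zero_dvd_iff.1 ((hgcd 0).1 hconst))

theorem exists_listEquiv_pairForm_gap (hd : 0 < d) (hgcd : IsDiffGcd d (pairForm δ p xs))
    (hxs : xs ≠ []) :
    ∃ q ys, ListEquiv (pairForm δ p xs) (pairForm δ q ((q + d) :: ys)) := by
  obtain ⟨x, hx, hpos⟩ := exists_gcd_pos_of_isDiffGcd hd hgcd hxs
  have hmove : ListEquiv (pairForm δ p xs)
      (pairForm δ (x + δ) ((x + δ + Int.gcd δ (x - p)) :: xs.erase x)) :=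
    (pairForm_listEquiv_of_perm (List.perm_cons_erase hx)).trans
      (pairForm_gcd_move δ p x _ (Int.natAbs_natCast _))
  obtain ⟨g, hg, q, ys, h, hgcd'⟩ :=
    exists_isDiffGcd_gap _ hpos (Int.gcd_dvd_left ..) (x + δ) (xs.erase x)
  have hlist := hmove.trans h
  obtain rfl : d = g := (hgcd.congr hlist).eq_of_nonneg hgcd' hd.le hg.le
  exact ⟨q, ys, hlist⟩

end Descent

section Classification

variable {δ p q d : ℤ} {xs ys : List ℤ}

theorem pairForm_listEquiv_of_modEq (hdδ : d ∣ δ) (hpq : p ≡ q [ZMOD 2 * d])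
    (h : (residues d (pairForm δ p ((p + d) :: xs))).Perm
      (residues d (pairForm δ q ((q + d) :: ys)))) :
    ListEquiv (pairForm δ p ((p + d) :: xs)) (pairForm δ q ((q + d) :: ys)) := by
  simp only [pairForm, residues_cons, double_cons, residues_double, hpq.eq, (hpq.sub_right δ).eq,
    (hpq.add_right d).eq, List.perm_cons] at h
  exact (pairForm_shift_of_modEq hdδ hpq xs).trans
    (pairForm_listEquiv_of_residues_perm (perm_of_double_perm h))

theorem exists_shift_of_two_mul_dvd (hδ : 2 * d ∣ δ) (p : ℤ) (xs : List ℤ) :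
    ∃ q ys, q ≡ p + d [ZMOD 2 * d] ∧
      ListEquiv (pairForm δ p ((p + d) :: xs)) (pairForm δ q ((q + d) :: ys)) := by
  refine ⟨p + d + δ, xs, ?_, pairForm_step (dvd_of_mul_left_dvd hδ) p xs⟩
  simpa using (Int.modEq_zero_iff_dvd.2 hδ).add_left (p + d)

theorem add_modEq_zero_of_modEq (hδ : δ ≡ d [ZMOD 2 * d]) : d + δ ≡ 0 [ZMOD 2 * d] := by
  calc d + δ ≡ d + d [ZMOD 2 * d] := hδ.add_left d
    _ ≡ 0 [ZMOD 2 * d] := Int.modEq_zero_iff_dvd.2 (by rw [two_mul])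

theorem exists_shift_of_modEq (hδ : δ ≡ d [ZMOD 2 * d]) {x : ℤ} (hx : x ∈ xs)
    (hxp : x ≡ p [ZMOD 2 * d]) :
    ∃ q ys, q ≡ p + d [ZMOD 2 * d] ∧
      ListEquiv (pairForm δ p ((p + d) :: xs)) (pairForm δ q ((q + d) :: ys)) := by
  have hxδ : x ≡ p + δ + d [ZMOD 2 * d] := by
    rw [show p + δ + d = p + (d + δ) by ring]
    exact hxp.trans (by simpa using ((add_modEq_zero_of_modEq hδ).add_left p).symm)
  refine ⟨p + δ, (p + d) :: xs.erase x, hδ.add_left p, ?_⟩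
  calc ListEquiv _ (pairForm δ p ((p + d) :: x :: xs.erase x)) :=
        pairForm_listEquiv_of_perm ((List.perm_cons_erase hx).cons _)
    ListEquiv _ (pairForm δ p ((p + d) :: (p + δ + d) :: xs.erase x)) :=
        pairForm_replace_of_modEq hxδ [] (xs.erase x)
    ListEquiv _ (pairForm δ p ((p + δ + d) :: (p + d) :: xs.erase x)) :=
        pairForm_listEquiv_of_perm (.swap ..)
    ListEquiv _ _ := by simpa using pairForm_translate δ p _ 1

theorem exists_modEq_of_residues_perm (hd : 0 < d) (hδ : δ ≡ d [ZMOD 2 * d])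
    (hq : q ≡ p + d [ZMOD 2 * d])
    (h : (residues d (pairForm δ p ((p + d) :: xs))).Perm
      (residues d (pairForm δ q ((q + d) :: ys)))) :
    ∃ x ∈ xs, x ≡ p [ZMOD 2 * d] := by
  have hpδ : p - δ ≡ p + d [ZMOD 2 * d] := by
    simpa using ((add_modEq_zero_of_modEq hδ).add_left (p - δ)).symm
  have hqδ : q - δ ≡ p [ZMOD 2 * d] := by simpa using hq.sub hδ
  have hqd : q + d ≡ p [ZMOD 2 * d] := by
    simpa [add_assoc, ← two_mul] using hq.add_right d
  have hne : p % (2 * d) ≠ (p + d) % (2 * d) := fun heq => by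
    have hdvd : 2 * d ∣ d := by simpa using Int.ModEq.dvd heq
    have := Int.le_of_dvd hd hdvd
    omega
  simp only [pairForm, residues_cons, double_cons, residues_double, hpδ.eq, hqδ.eq, hqd.eq,
    hq.eq] at h
  have hdouble : (double ((p + d) % (2 * d) :: residues d xs)).Perm
      (double (p % (2 * d) :: residues d ys)) := by
    simpa using h.trans (.swap ..)
  have hmem := (perm_of_double_perm hdouble).mem_iff.2 List.mem_cons_self
  exact List.mem_map.1 ((List.mem_cons.1 hmem).resolve_left hne)

theorem exists_shift_of_residues_perm (hd : 0 < d) (hdδ : d ∣ δ)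
    (hq : q ≡ p + d [ZMOD 2 * d])
    (h : (residues d (pairForm δ p ((p + d) :: xs))).Perm
      (residues d (pairForm δ q ((q + d) :: ys)))) :
    ∃ q' zs, q' ≡ p + d [ZMOD 2 * d] ∧
      ListEquiv (pairForm δ p ((p + d) :: xs)) (pairForm δ q' ((q' + d) :: zs)) := by
  obtain ⟨c, rfl⟩ := hdδ
  obtain ⟨k, rfl | rfl⟩ := Int.even_or_odd' c
  · exact exists_shift_of_two_mul_dvd ⟨k, by ring⟩ p xs
  · have hδ : d * (2 * k + 1) ≡ d [ZMOD 2 * d] :=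
      (Int.modEq_iff_dvd.2 ⟨k, by ring⟩ : d ≡ d * (2 * k + 1) [ZMOD 2 * d]).symm
    obtain ⟨x, hx, hxp⟩ := exists_modEq_of_residues_perm hd hδ hq h
    exact exists_shift_of_modEq hδ hx hxp

theorem pairForm_listEquiv_of_gap (hd : 0 < d) (hl : AllModEq d (pairForm δ p ((p + d) :: xs)))
    (h : (residues d (pairForm δ p ((p + d) :: xs))).Perm
      (residues d (pairForm δ q ((q + d) :: ys)))) :
    ListEquiv (pairForm δ p ((p + d) :: xs)) (pairForm δ q ((q + d) :: ys)) := by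
  have hdδ : d ∣ δ := (allModEq_pairForm_iff.1 hl).1
  obtain ⟨c, hc⟩ : d ∣ q - p :=
    (hl.modEq_of_residues_perm h (by simp [pairForm]) (by simp [pairForm])).dvd
  obtain ⟨k, rfl | rfl⟩ := Int.even_or_odd' c
  · exact pairForm_listEquiv_of_modEq hdδ
      (Int.modEq_iff_dvd.2 ⟨k, by linear_combination hc⟩) h
  · have hq : p + d ≡ q [ZMOD 2 * d] := Int.modEq_iff_dvd.2 ⟨k, by linear_combination hc⟩
    obtain ⟨q', zs, hq', hshift⟩ := exists_shift_of_residues_perm hd hdδ hq.symm h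
    exact hshift.trans (pairForm_listEquiv_of_modEq hdδ (hq'.trans hq)
      ((hshift.residues_perm hl).symm.trans h))

theorem pair_listEquiv_of_isDiffGcd (hp : IsDiffGcd d (pairForm δ p []))
    (h : (residues d (pairForm δ p [])).Perm (residues d (pairForm δ q []))) :
    ListEquiv (pairForm δ p []) (pairForm δ q []) := by
  have hδd : δ ∣ d := (hp δ).1 (allModEq_pairForm_iff.2 ⟨dvd_rfl, by simp⟩)
  have hpq : p ≡ q [ZMOD d] :=
    hp.allModEq.modEq_of_residues_perm h (by simp [pairForm]) (by simp [pairForm])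
  obtain ⟨k, hk⟩ := hδd.trans hpq.dvd
  obtain rfl : q = p + k * δ := by linear_combination hk
  exact pairForm_translate δ p [] k

theorem pairForm_listEquiv (hd : 0 < d) (hlen : xs.length = ys.length)
    (hp : IsDiffGcd d (pairForm δ p xs)) (hq : IsDiffGcd d (pairForm δ q ys))
    (h : (residues d (pairForm δ p xs)).Perm (residues d (pairForm δ q ys))) :
    ListEquiv (pairForm δ p xs) (pairForm δ q ys) := by
  rcases eq_or_ne xs [] with rfl | hxs
  · obtain rfl : ys = [] := List.length_eq_zero_iff.1 hlen.symm
    exact pair_listEquiv_of_isDiffGcd hp h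
  · have hys : ys ≠ [] := fun hys => hxs (List.length_eq_zero_iff.1 (by rw [hlen, hys]; rfl))
    obtain ⟨p', xs', hp'⟩ := exists_listEquiv_pairForm_gap hd hp hxs
    obtain ⟨q', ys', hq'⟩ := exists_listEquiv_pairForm_gap hd hq hys
    have hres := (hp'.residues_perm hp.allModEq).symm.trans
      (h.trans (hq'.residues_perm hq.allModEq))
    exact hp'.trans ((pairForm_listEquiv_of_gap hd (hp.congr hp').allModEq hres).trans hq'.symm)

theorem listEquiv_of_invariants_eq {m : ℕ} {l l' : List ℤ} (hlen : l.length = 2 * (m + 1))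
    (hd : 0 < d) (hl : IsDiffGcd d l) (hl' : IsDiffGcd d l')
    (hsum : l.alternatingSum = l'.alternatingSum) (hres : (residues d l).Perm (residues d l')) :
    ListEquiv l l' := by
  have hlen' : l'.length = 2 * (m + 1) := by
    simpa only [residues, List.length_map, hlen] using hres.length_eq.symm
  obtain ⟨δ, p, xs, hxs, h⟩ := exists_listEquiv_pairForm m hlen
  obtain ⟨δ', q, ys, hys, h'⟩ := exists_listEquiv_pairForm m hlen'
  obtain rfl : δ = δ' := by
    rw [← alternatingSum_pairForm δ p xs, ← h.alternatingSum_eq, hsum, h'.alternatingSum_eq,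
      alternatingSum_pairForm]
  have hforms := pairForm_listEquiv hd (hxs.trans hys.symm) (hl.congr h) (hl'.congr h')
    ((h.residues_perm hl.allModEq).symm.trans (hres.trans (h'.residues_perm hl'.allModEq)))
  exact h.trans (hforms.trans h'.symm)

end Classification

section Vectors

variable {n : ℕ} {v w : Fin n → ℤ}

theorem alternatingSum_ofFn (v : Fin n → ℤ) : (List.ofFn v).alternatingSum = altSum v := by
  rw [altSum, List.alternatingSum_eq_finsetSum]
  exact Fintype.sum_equiv (finCongr (by simp)) _ _ fun i => by simp [Fin.cast]

theorem isDiffGcd_ofFn (v : Fin n → ℤ) : IsDiffGcd (dval v) (List.ofFn v) := by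
  intro k
  rw [← Int.natAbs_dvd, Int.natCast_dvd_natCast, dval, Finset.dvd_gcd_iff]
  simp only [AllModEq, List.forall_mem_ofFn_iff, Int.natAbs_dvd_natAbs, Int.modEq_iff_dvd,
    Finset.mem_univ, forall_const, Prod.forall]
  exact forall_comm

theorem mresMod_eq_residues (v : Fin n → ℤ) (d : ℕ) :
    MresMod v d = (residues d (List.ofFn v) : Multiset ℤ) := by
  rw [MresMod, residues, List.map_ofFn, Fin.univ_val_map]
  rfl

theorem mresMod_eq_iff (d : ℕ) :
    MresMod v d = MresMod w d ↔ (residues d (List.ofFn v)).Perm (residues d (List.ofFn w)) := by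
  rw [mresMod_eq_residues, mresMod_eq_residues, Multiset.coe_eq_coe]

theorem dval_pos (hv : ¬ IsTrivialVec v) : 0 < dval v := by
  refine Nat.pos_of_ne_zero fun hzero => hv fun i j => ?_
  have hconst : AllModEq 0 (List.ofFn v) := (isDiffGcd_ofFn v 0).2 (by simp [hzero])
  exact Int.modEq_zero_iff.1 (hconst (v i) (by simp) (v j) (by simp))

theorem ofFn_eq_take_append_drop (v : Fin n → ℤ) {i : ℕ} (hi : i + 1 < n) :
    List.ofFn v = (List.ofFn v).take i ++ v ⟨i, Nat.lt_of_succ_lt hi⟩ :: v ⟨i + 1, hi⟩ ::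
      (List.ofFn v).drop (i + 2) := by
  conv_lhs => rw [← List.take_append_drop i (List.ofFn v)]
  rw [List.drop_eq_getElem_cons (by rw [List.length_ofFn]; omega),
    List.drop_eq_getElem_cons (by rw [List.length_ofFn]; omega)]
  simp only [List.getElem_ofFn]

theorem listMove_of_isHurwitzMove (h : IsHurwitzMove v w) :
    ListMove (List.ofFn v) (List.ofFn w) := by
  obtain ⟨i, hi, hfst, hsnd, hrest⟩ := h
  have htake : (List.ofFn w).take i = (List.ofFn v).take i := by
    refine List.ext_getElem (by simp) fun j hj _ => ?_
    have hji : j < i := hj.trans_le (List.length_take_le ..)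
    simpa using hrest ⟨j, by omega⟩ hji.ne (hji.trans i.lt_succ_self).ne
  have hdrop : (List.ofFn w).drop (i + 2) = (List.ofFn v).drop (i + 2) := by
    refine List.ext_getElem (by simp) fun j hj _ => ?_
    have hjn : i + 2 + j < n := by
      rw [List.length_drop, List.length_ofFn] at hj
      omega
    simpa using hrest ⟨i + 2 + j, hjn⟩ (show i + 2 + j ≠ i by omega)
      (show i + 2 + j ≠ i + 1 by omega)
  rw [ofFn_eq_take_append_drop v hi, ofFn_eq_take_append_drop w hi, htake, hdrop, hfst, hsnd]
  exact .mk ..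

theorem isHurwitzMove_of_listMove (h : ListMove (List.ofFn v) (List.ofFn w)) :
    IsHurwitzMove v w := by
  generalize hl : List.ofFn v = l, hl' : List.ofFn w = l' at h
  obtain ⟨l₁, a, b, l₂⟩ := h
  have hn : n = l₁.length + (l₂.length + 2) := by simpa using congrArg List.length hl
  have hv (j : Fin n) : v j = (l₁ ++ a :: b :: l₂)[(j : ℕ)]'(by grind) := by simp [← hl]
  have hw (j : Fin n) : w j = (l₁ ++ b :: (2 * b - a) :: l₂)[(j : ℕ)]'(by grind) := by
    simp [← hl']
  refine ⟨l₁.length, by omega, by simp [hv, hw], by simp [hv, hw], fun j hfst hsnd => ?_⟩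
  rw [hv, hw]
  rcases lt_or_ge (j : ℕ) l₁.length with hj | hj
  · rw [List.getElem_append_left hj, List.getElem_append_left hj]
  · obtain ⟨t, ht⟩ : ∃ t, (j : ℕ) - l₁.length = t + 2 := ⟨j - l₁.length - 2, by omega⟩
    simp [List.getElem_append_right hj, ht]

theorem eqvGen_of_listEquiv_ofFn (h : ListEquiv (List.ofFn v) (List.ofFn w)) :
    Relation.EqvGen IsHurwitzMove v w := by
  generalize hl : List.ofFn v = l, hl' : List.ofFn w = l' at h
  induction h generalizing v w with
  | rel => subst hl hl'; exact .rel _ _ (isHurwitzMove_of_listMove ‹_›)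
  | refl => rw [List.ofFn_injective (hl.trans hl'.symm)]; exact .refl _
  | symm _ _ _ ih => exact .symm _ _ (ih hl' hl)
  | trans _ l _ h _ ih ih' =>
    obtain rfl : l.length = n := by rw [← ListEquiv.length_eq h, ← hl, List.length_ofFn]
    exact .trans _ l.get _ (ih hl (List.ofFn_get l)) (ih' (List.ofFn_get l) hl')

theorem hurwitzEquiv_iff_eqvGen :
    HurwitzEquiv v w ↔ Relation.EqvGen IsHurwitzMove v w := by
  rw [← Relation.EqvGen.reflTransGen_symmGen]
  rfl

theorem hurwitzEquiv_iff_listEquiv :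
    HurwitzEquiv v w ↔ ListEquiv (List.ofFn v) (List.ofFn w) := by
  rw [hurwitzEquiv_iff_eqvGen]
  refine ⟨fun h => ?_, eqvGen_of_listEquiv_ofFn⟩
  induction h with
  | rel _ _ h => exact (listMove_of_isHurwitzMove h).listEquiv
  | refl => exact .refl _
  | symm _ _ _ ih => exact ih.symm
  | trans _ _ _ _ _ ih ih' => exact ih.trans ih'

end Vectors

end HurwitzEquiv

open HurwitzEquiv

/-- Two nontrivial vectors in ℤ^{2m} are Hurwitz equivalent iff they have the same
Δ, d, and M. -/
theorem stmt_5 (m : ℕ) (hm : 1 ≤ m) (v w : Fin (2 * m) → ℤ)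
    (hv : ¬ IsTrivialVec v) (hw : ¬ IsTrivialVec w) :
    HurwitzEquiv v w ↔
      (altSum v = altSum w ∧ dval v = dval w ∧ Mres v = Mres w) := by
  have hgcd := isDiffGcd_ofFn v
  rw [hurwitzEquiv_iff_listEquiv, ← alternatingSum_ofFn, ← alternatingSum_ofFn]
  constructor
  · intro h
    have hdval : dval v = dval w := Int.natCast_inj.1 <|
      (hgcd.congr h).eq_of_nonneg (isDiffGcd_ofFn w) (Int.natCast_nonneg _) (Int.natCast_nonneg _)
    refine ⟨h.alternatingSum_eq, hdval, ?_⟩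
    rw [Mres, Mres, ← hdval]
    exact (mresMod_eq_iff (dval v)).2 (h.residues_perm hgcd.allModEq)
  · rintro ⟨hsum, hdval, hres⟩
    rw [Mres, Mres, ← hdval] at hres
    obtain ⟨m, rfl⟩ := Nat.exists_eq_add_of_le' hm
    exact listEquiv_of_invariants_eq (List.length_ofFn ..) (Int.natCast_pos.2 (dval_pos hv)) hgcd
      (hdval ▸ isDiffGcd_ofFn w) hsum ((mresMod_eq_iff (dval v)).1 hres)
end

section
/- Let m ≥ 1, let v = (a_1,…,a_{2m}) ∈ ℤ^{2m} be a nontrivial vector, and let k = k(v). Suppose there exists a fixed-point-free involution f of the index set {1,…,2m} such that a_i ≡ a_{f(i)} (mod 2^{k+1}) for every i. Then Δ(v) is divisible by 2^{k+1}. -/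
/-!
Fix `d` dividing all differences of entries of `v`, such as `2 ^ kval v`. The signs of the
alternating sum add up to zero, so subtracting a fixed entry from every `v i` does not change the
sum, and one may assume that `d` divides every entry. Two odd signs have an even sum, so
`ε i * v i + ε (f i) * v (f i) = ε i * (v i - v (f i)) + (ε i + ε (f i)) * v (f i)`
is divisible by `2 * d`; summing over the pairs of the involution `f` gives the claim.
-/

section Involution

variable {ι R : Type*} [Fintype ι] [CommRing R] {f : ι → ι}

theorem dvd_sum_of_involutive (hinv : Function.Involutive f) (hfpf : ∀ i, f i ≠ i) {x : ι → R}
    {d : R} (hpair : ∀ i, d ∣ x i + x (f i)) : d ∣ ∑ i, x i := by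
  simp only [← Ideal.Quotient.eq_zero_iff_dvd, map_add, map_sum] at hpair ⊢
  exact Finset.sum_involution (fun i _ => f i) (fun i _ => hpair i) (fun i _ _ => hfpf i)
    (fun i _ => Finset.mem_univ (f i)) (fun i _ => hinv i)

theorem even_card_of_involutive (hinv : Function.Involutive f) (hfpf : ∀ i, f i ≠ i) :
    Even (Fintype.card ι) := by
  have two_dvd_sum_one : (2 : ℤ) ∣ ∑ _i : ι, 1 :=
    dvd_sum_of_involutive hinv hfpf fun _ => by norm_num
  rw [even_iff_two_dvd]
  simpa [← Int.natCast_dvd_natCast] using two_dvd_sum_one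

theorem two_mul_dvd_sum_odd_mul (hinv : Function.Involutive f) (hfpf : ∀ i, f i ≠ i)
    {ε x : ι → R} {d : R} (hε : ∀ i, Odd (ε i)) (hx : ∀ i, d ∣ x i)
    (hcong : ∀ i, 2 * d ∣ x i - x (f i)) : 2 * d ∣ ∑ i, ε i * x i := by
  refine dvd_sum_of_involutive hinv hfpf fun i => ?_
  have two_dvd_signs : 2 ∣ ε i + ε (f i) := ((hε i).add_odd (hε (f i))).two_dvd
  have pair_eq : ε i * x i + ε (f i) * x (f i) =
      ε i * (x i - x (f i)) + (ε i + ε (f i)) * x (f i) := by ring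
  rw [pair_eq]
  exact dvd_add ((hcong i).mul_left (ε i)) (mul_dvd_mul two_dvd_signs (hx (f i)))

theorem two_mul_dvd_sum_odd_mul_of_sum_eq_zero (hinv : Function.Involutive f)
    (hfpf : ∀ i, f i ≠ i) {ε v : ι → R} {d : R} (hε : ∀ i, Odd (ε i)) (hsum : ∑ i, ε i = 0)
    (hd : ∀ i j, d ∣ v i - v j) (hcong : ∀ i, 2 * d ∣ v i - v (f i)) :
    2 * d ∣ ∑ i, ε i * v i := by
  rcases isEmpty_or_nonempty ι with _ | ⟨⟨i₀⟩⟩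
  · simp
  · have sum_translate : ∑ i, ε i * (v i - v i₀) = ∑ i, ε i * v i := by
      simp only [mul_sub, Finset.sum_sub_distrib, ← Finset.sum_mul, hsum, zero_mul, sub_zero]
    rw [← sum_translate]
    exact two_mul_dvd_sum_odd_mul hinv hfpf hε (fun i => hd i i₀) fun i => by
      simpa only [sub_sub_sub_cancel_right] using hcong i

end Involution

theorem sum_neg_one_pow_eq_zero_of_even {R : Type*} [Ring R] {n : ℕ} (hn : Even n) :
    ∑ i : Fin n, (-1 : R) ^ (i : ℕ) = 0 := by
  rw [Fin.sum_univ_eq_sum_range (fun i => (-1 : R) ^ i), neg_one_geom_sum, if_pos hn]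

theorem two_pow_kval_dvd_sub {n : ℕ} (v : Fin n → ℤ) (i j : Fin n) :
    (2 : ℤ) ^ kval v ∣ v i - v j := by
  have pow_dvd_dval : 2 ^ kval v ∣ dval v := pow_padicValNat_dvd
  have dval_dvd : dval v ∣ (v i - v j).natAbs := Finset.gcd_dvd (Finset.mem_univ (i, j))
  exact_mod_cast Int.natCast_dvd.mpr (pow_dvd_dval.trans dval_dvd)

theorem stmt_10_general {n : ℕ} {v : Fin n → ℤ} {d : ℤ} (hd : ∀ i j, d ∣ v i - v j)
    {f : Fin n → Fin n} (hinv : Function.Involutive f) (hfpf : ∀ i, f i ≠ i)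
    (hcong : ∀ i, 2 * d ∣ v i - v (f i)) : 2 * d ∣ altSum v := by
  have n_even : Even n := by simpa using even_card_of_involutive hinv hfpf
  exact two_mul_dvd_sum_odd_mul_of_sum_eq_zero hinv hfpf (fun _ => odd_neg_one.pow)
    (sum_neg_one_pow_eq_zero_of_even n_even) hd hcong

/-- If a fixed-point-free involution f of the indices pairs up entries of a nontrivial
vector v that are congruent modulo 2^{k(v)+1}, then 2^{k(v)+1} divides Δ(v). -/
theorem stmt_10 (m : ℕ) (hm : 1 ≤ m) (v : Fin (2 * m) → ℤ)
    (hv : ¬ IsTrivialVec v)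
    (f : Fin (2 * m) → Fin (2 * m))
    (hinv : Function.Involutive f)
    (hfpf : ∀ i, f i ≠ i)
    (hcong : ∀ i, (2 : ℤ) ^ (kval v + 1) ∣ v i - v (f i)) :
    (2 : ℤ) ^ (kval v + 1) ∣ altSum v := by
  simp only [pow_succ'] at hcong ⊢
  exact stmt_10_general (two_pow_kval_dvd_sub v) hinv hfpf hcong
end
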